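/- For the Split-AI learner (which trains K sub-models on overlapping subsets of the member set and answers each query on a point using only the L sub-models whose training sets exclude that point, as described below), every direct single-query membership-inference adversary has success probability exactly 1/2. Precisely: for every dataset x : Fin (2n) → 𝒳, every training map train, and every adversary A : Fin (2n) × (Fin k → ℝ) → PMF Bool, if the game samples the challenge index i uniformly from Fin (2n), then the probability (over the membership vector b, the non-model index sets Id_non, the choice i' for non-member queries, the uniform i, and A's internal randomness) that A(i, r_i) outputs b i is exactly 1/2. -/

import Mathlib

/-!
Statement 0: For the Split-AI learner, every direct single-query membership-inference
adversary has success probability exactly 1/2.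
-/

open scoped BigOperators

noncomputable section

/-- Boolean vectors of length `2n` with Hamming weight exactly `n`. -/
def weightVectors (n : ℕ) : Finset (Fin (2 * n) → Bool) :=
  Finset.univ.filter (fun b => (Finset.univ.filter (fun i => b i = true)).card = n)

lemma weightVectors_nonempty (n : ℕ) : (weightVectors n).Nonempty := by
  obtain ⟨S, -, hS⟩ :=
    Finset.exists_subset_card_eq
      (show n ≤ (Finset.univ : Finset (Fin (2 * n))).card by simp; omega)
  refine ⟨fun i => decide (i ∈ S), ?_⟩
  simp only [weightVectors, Finset.mem_filter, Finset.mem_univ, true_and]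
  have h : Finset.univ.filter (fun i : Fin (2 * n) => decide (i ∈ S) = true) = S := by
    ext i; simp
  rw [h, hS]

/-- The member set `S = {i : b i = true}`. -/
def memberSet {n : ℕ} (b : Fin (2 * n) → Bool) : Finset (Fin (2 * n)) :=
  Finset.univ.filter (fun i => b i = true)

/-- Assignments of an `L`-element subset of `Fin K` (the non-model indices) to
each index of the dataset. -/
def idnonFuns (n K L : ℕ) : Finset (Fin (2 * n) → Finset (Fin K)) :=
  Finset.univ.filter (fun f => ∀ i, (f i).card = L)

lemma idnonFuns_nonempty (n K L : ℕ) (hLK : L ≤ K) : (idnonFuns n K L).Nonempty := by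
  obtain ⟨T, -, hT⟩ :=
    Finset.exists_subset_card_eq
      (show L ≤ (Finset.univ : Finset (Fin K)).card by simpa using hLK)
  exact ⟨fun _ => T, by simp [idnonFuns, hT]⟩

/-- Uniform distribution on a finset, with a default value if the finset is empty. -/
def uniformOn' {α : Type*} (s : Finset α) (d : α) : PMF α :=
  if h : s.Nonempty then PMF.uniformOfFinset s h else PMF.pure d

/-- The sub-model `F_m`, trained (via `train`) on the data points of the members `j`
with `m ∉ Id_non(j)`. -/
def subModel {n K k : ℕ} {𝒳 : Type*} [DecidableEq 𝒳]
    (x : Fin (2 * n) → 𝒳) (train : Finset 𝒳 → 𝒳 → Fin k → ℝ)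
    (b : Fin (2 * n) → Bool) (Idnon : Fin (2 * n) → Finset (Fin K)) (m : Fin K) :
    𝒳 → Fin k → ℝ :=
  train (((memberSet b).filter (fun j => m ∉ Idnon j)).image x)

/-- The Split-AI answer `r_i` on the query at index `i`: the average of the `L`
sub-models with indices in `Id_non(i)` if `i` is a member, and in `Id_non(i')`
otherwise. -/
def splitAIAnswer {n K k : ℕ} (L : ℕ) {𝒳 : Type*} [DecidableEq 𝒳]
    (x : Fin (2 * n) → 𝒳) (train : Finset 𝒳 → 𝒳 → Fin k → ℝ)
    (b : Fin (2 * n) → Bool) (Idnon : Fin (2 * n) → Finset (Fin K))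
    (i' i : Fin (2 * n)) : Fin k → ℝ :=
  fun c =>
    if b i then (L : ℝ)⁻¹ * ∑ m ∈ Idnon i, subModel x train b Idnon m (x i) c
    else (L : ℝ)⁻¹ * ∑ m ∈ Idnon i', subModel x train b Idnon m (x i) c

/-- The Split-AI direct single-query membership-inference game: sample the membership
vector `b` uniformly from the weight-`n` vectors, the non-model index sets `Id_non`
uniformly and independently, `i'` uniformly from the member set, the challenge index
`i` uniformly from `Fin (2n)`, give `(i, r_i)` to the adversary `A`, and output
whether `A`'s guess equals `b i`. -/
def splitAIGame {n K L k : ℕ} (hn : 0 < n) (hLK : L ≤ K) {𝒳 : Type*} [DecidableEq 𝒳]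
    (x : Fin (2 * n) → 𝒳) (train : Finset 𝒳 → 𝒳 → Fin k → ℝ)
    (A : Fin (2 * n) × (Fin k → ℝ) → PMF Bool) : PMF Bool :=
  have h2n : 0 < 2 * n := by omega
  (PMF.uniformOfFinset (weightVectors n) (weightVectors_nonempty n)).bind fun b =>
    (PMF.uniformOfFinset (idnonFuns n K L) (idnonFuns_nonempty n K L hLK)).bind fun Idnon =>
      (uniformOn' (memberSet b) ⟨0, h2n⟩).bind fun i' =>
        (PMF.uniformOfFinset (Finset.univ : Finset (Fin (2 * n)))
            ⟨⟨0, h2n⟩, Finset.mem_univ _⟩).bind fun i =>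
          (A (i, splitAIAnswer L x train b Idnon i' i)).map fun c => decide (c = b i)

lemma aux_bind {α β : Type*} (s : Finset α) (hs : s.Nonempty) (f : α → PMF β) (c : β) :
    (PMF.uniformOfFinset s hs).bind f c = (s.card : ENNReal)⁻¹ * ∑ a ∈ s, f a c := by
  rw [PMF.bind_apply, tsum_eq_sum (s := s), Finset.mul_sum]
  · refine Finset.sum_congr rfl fun a ha => ?_
    rw [PMF.uniformOfFinset_apply_of_mem hs ha]
  · intro a ha
    rw [PMF.uniformOfFinset_apply_of_notMem hs ha, zero_mul]

lemma aux_map (p : PMF Bool) (v : Bool) : (p.map fun c => decide (c = v)) true = p v := by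
  rw [PMF.map_apply, tsum_fintype]
  cases v <;> simp

lemma aux_bool (p : PMF Bool) : p true + p false = 1 := by
  have := p.tsum_coe
  rwa [tsum_fintype, Fintype.sum_bool] at this

lemma aux_card {n : ℕ} {b : Fin (2 * n) → Bool} (hb : b ∈ weightVectors n) :
    (memberSet b).card = n := by
  simpa [weightVectors, memberSet] using hb

lemma aux_card_false {n : ℕ} {b : Fin (2 * n) → Bool} (hb : b ∈ weightVectors n) :
    (Finset.univ.filter (fun i => b i = false)).card = n := by
  have h := aux_card hb
  have h2 := Finset.card_filter_add_card_filter_not (s := (Finset.univ : Finset (Fin (2 * n))))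
    (fun i => b i = true)
  simp only [Bool.not_eq_true, Finset.card_univ, Fintype.card_fin] at h2
  unfold memberSet at h
  omega

lemma aux_perm {n : ℕ} (σ : Equiv.Perm (Fin (2 * n))) {b : Fin (2 * n) → Bool}
    (hb : b ∈ weightVectors n) : (fun j => b (σ j)) ∈ weightVectors n := by
  have h := aux_card hb
  simp only [weightVectors, Finset.mem_filter, Finset.mem_univ, true_and]
  refine Eq.trans ?_ h
  unfold memberSet
  refine Finset.card_bij (fun a _ => σ a) ?_ ?_ ?_
  · intro a ha; simpa using ha
  · intro a _ c _ h; exact σ.injective h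
  · intro c hc; exact ⟨σ.symm c, by simpa using hc, by simp⟩

lemma aux_half {n : ℕ} (i : Fin (2 * n)) :
    2 * ((weightVectors n).filter (fun b => b i = false)).card = (weightVectors n).card := by
  have h2 := Finset.card_filter_add_card_filter_not (s := weightVectors n)
    (fun b => b i = false)
  have h3 : ((weightVectors n).filter (fun b => b i = false)).card
      = ((weightVectors n).filter (fun b => ¬ b i = false)).card := by
    have key : ∀ b ∈ weightVectors n, (fun j => !(b j)) ∈ weightVectors n := by
      intro b hb
      have := aux_card_false hb
      simpa [weightVectors] using this
    refine Finset.card_bij' (fun b _ j => !(b j)) (fun b _ j => !(b j)) ?_ ?_ ?_ ?_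
    · intro b hb
      rw [Finset.mem_filter] at hb ⊢
      exact ⟨key b hb.1, by simp [hb.2]⟩
    · intro b hb
      rw [Finset.mem_filter] at hb ⊢
      exact ⟨key b hb.1, by simpa using hb.2⟩
    · intro b _; simp
    · intro b _; simp
  omega

/-- Swapping `i` and `i'` does not change the answer. -/
lemma aux_answer {n K k : ℕ} (L : ℕ) {𝒳 : Type*} [DecidableEq 𝒳]
    (x : Fin (2 * n) → 𝒳) (train : Finset 𝒳 → 𝒳 → Fin k → ℝ)
    (b : Fin (2 * n) → Bool) (Idnon : Fin (2 * n) → Finset (Fin K))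
    (i' i : Fin (2 * n)) (hi : b i = true) (hi' : b i' = false) :
    splitAIAnswer L x train b Idnon i' i =
      splitAIAnswer L x train (fun j => b (Equiv.swap i i' j))
        (fun j => Idnon (Equiv.swap i i' j)) i' i := by
  funext c
  simp only [splitAIAnswer, Equiv.swap_apply_left, Equiv.swap_apply_right, hi, hi', if_true,
    Bool.false_eq_true, if_false]
  congr 1
  refine Finset.sum_congr rfl fun m hm => ?_
  unfold subModel
  refine congrArg (fun s => train (Finset.image x s) (x i) c) ?_
  ext j
  simp only [memberSet, Finset.mem_filter, Finset.mem_univ, true_and]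
  by_cases h1 : j = i
  · subst h1
    simp [hi', hm]
  by_cases h2 : j = i'
  · subst h2
    simp [hi', hm]
  rw [Equiv.swap_apply_of_ne_of_ne h1 h2]

lemma aux_member {n K k : ℕ} (L : ℕ) {𝒳 : Type*} [DecidableEq 𝒳]
    (x : Fin (2 * n) → 𝒳) (train : Finset 𝒳 → 𝒳 → Fin k → ℝ)
    (b : Fin (2 * n) → Bool) (Idnon : Fin (2 * n) → Finset (Fin K))
    (i' i'' i : Fin (2 * n)) (hi : b i = true) :
    splitAIAnswer L x train b Idnon i' i = splitAIAnswer L x train b Idnon i'' i := by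
  funext c
  simp [splitAIAnswer, hi]

lemma aux_flat {α β γ : Type*} (s : Finset α) (t : Finset β) (u : α → Finset γ)
    (f : α → β → γ → ENNReal) :
    ∑ a ∈ s, ∑ b ∈ t, ∑ c ∈ u a, f a b c
      = ∑ q ∈ s.sigma (fun a => t ×ˢ u a), f q.1 q.2.1 q.2.2 := by
  rw [Finset.sum_sigma]
  refine Finset.sum_congr rfl fun a _ => ?_
  rw [Finset.sum_product]

lemma aux_swap {n K L k : ℕ} {𝒳 : Type*} [DecidableEq 𝒳]
    (x : Fin (2 * n) → 𝒳) (train : Finset 𝒳 → 𝒳 → Fin k → ℝ)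
    (A : Fin (2 * n) × (Fin k → ℝ) → PMF Bool) (i : Fin (2 * n)) :
    ∑ b ∈ (weightVectors n).filter (fun b => ¬ b i = false), ∑ Idnon ∈ idnonFuns n K L,
      ∑ i' ∈ Finset.univ.filter (fun j => b j = false),
        A (i, splitAIAnswer L x train b Idnon i' i) true
    = ∑ b ∈ (weightVectors n).filter (fun b => b i = false), ∑ Idnon ∈ idnonFuns n K L,
      ∑ i' ∈ memberSet b, A (i, splitAIAnswer L x train b Idnon i' i) true := by
  rw [aux_flat, aux_flat]
  refine Finset.sum_bij'
    (fun q _ => ⟨fun j => q.1 (Equiv.swap i q.2.2 j),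
      (fun j => q.2.1 (Equiv.swap i q.2.2 j), q.2.2)⟩)
    (fun q _ => ⟨fun j => q.1 (Equiv.swap i q.2.2 j),
      (fun j => q.2.1 (Equiv.swap i q.2.2 j), q.2.2)⟩) ?_ ?_ ?_ ?_ ?_
  · rintro ⟨b, f, i'⟩ hq
    simp only [Finset.mem_sigma, Finset.mem_filter, Finset.mem_product, memberSet, idnonFuns,
      Finset.mem_univ, true_and, Equiv.swap_apply_left, Equiv.swap_apply_right] at hq ⊢
    exact ⟨⟨aux_perm _ hq.1.1, hq.2.2⟩, fun j => hq.2.1 _, by simpa using hq.1.2⟩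
  · rintro ⟨b, f, i'⟩ hq
    simp only [Finset.mem_sigma, Finset.mem_filter, Finset.mem_product, memberSet, idnonFuns,
      Finset.mem_univ, true_and, Equiv.swap_apply_left, Equiv.swap_apply_right] at hq ⊢
    exact ⟨⟨aux_perm _ hq.1.1, by simp [hq.2.2]⟩, fun j => hq.2.1 _, hq.1.2⟩
  · rintro ⟨b, f, i'⟩ _
    simp
  · rintro ⟨b, f, i'⟩ _
    simp
  · rintro ⟨b, f, i'⟩ hq
    simp only [Finset.mem_sigma, Finset.mem_filter, Finset.mem_product,
      Finset.mem_univ, true_and] at hq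
    simp only
    rw [aux_answer L x train b f i' i (by simpa using hq.1.2) hq.2.2]

lemma aux_index {n K L k : ℕ} {𝒳 : Type*} [DecidableEq 𝒳]
    (x : Fin (2 * n) → 𝒳) (train : Finset 𝒳 → 𝒳 → Fin k → ℝ)
    (A : Fin (2 * n) × (Fin k → ℝ) → PMF Bool) (i : Fin (2 * n)) :
    ∑ b ∈ weightVectors n, ∑ Idnon ∈ idnonFuns n K L, ∑ i' ∈ memberSet b,
      A (i, splitAIAnswer L x train b Idnon i' i) (b i)
    = ((((weightVectors n).filter (fun b => b i = false)).card * ((idnonFuns n K L).card * n) : ℕ) :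
        ENNReal) := by
  rw [← Finset.sum_filter_add_sum_filter_not (weightVectors n) (fun b => b i = false)]
  have h1 : ∑ b ∈ (weightVectors n).filter (fun b => ¬ b i = false), ∑ Idnon ∈ idnonFuns n K L,
      ∑ i' ∈ memberSet b, A (i, splitAIAnswer L x train b Idnon i' i) (b i)
      = ∑ b ∈ (weightVectors n).filter (fun b => ¬ b i = false), ∑ Idnon ∈ idnonFuns n K L,
      ∑ i' ∈ Finset.univ.filter (fun j => b j = false),
        A (i, splitAIAnswer L x train b Idnon i' i) true := by
    refine Finset.sum_congr rfl fun b hb => Finset.sum_congr rfl fun f _ => ?_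
    rw [Finset.mem_filter] at hb
    have hbi : b i = true := by simpa using hb.2
    have e : ∀ i', splitAIAnswer L x train b f i' i = splitAIAnswer L x train b f i i :=
      fun i' => aux_member L x train b f i' i i hbi
    simp only [e, hbi, Finset.sum_const, aux_card hb.1, aux_card_false hb.1]
  rw [h1, aux_swap, ← Finset.sum_add_distrib]
  have h2 : ∀ b ∈ (weightVectors n).filter (fun b => b i = false),
      (∑ Idnon ∈ idnonFuns n K L, ∑ i' ∈ memberSet b,
        A (i, splitAIAnswer L x train b Idnon i' i) (b i)) +
      (∑ Idnon ∈ idnonFuns n K L, ∑ i' ∈ memberSet b,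
        A (i, splitAIAnswer L x train b Idnon i' i) true)
      = (((idnonFuns n K L).card * n : ℕ) : ENNReal) := by
    intro b hb
    rw [Finset.mem_filter] at hb
    simp only [← Finset.sum_add_distrib, hb.2]
    simp only [add_comm (PMF.instFunLike.coe _ false), aux_bool]
    simp [aux_card hb.1]
  rw [Finset.sum_congr rfl h2]
  simp

lemma aux_game {n K L k : ℕ} (hn : 0 < n) (hLK : L ≤ K) {𝒳 : Type*} [DecidableEq 𝒳]
    (x : Fin (2 * n) → 𝒳) (train : Finset 𝒳 → 𝒳 → Fin k → ℝ)
    (A : Fin (2 * n) × (Fin k → ℝ) → PMF Bool) :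
    splitAIGame hn hLK x train A true =
      ((weightVectors n).card : ENNReal)⁻¹ * (((idnonFuns n K L).card : ENNReal)⁻¹ *
        ((n : ENNReal)⁻¹ * (((2 * n : ℕ) : ENNReal)⁻¹ *
          ∑ i, ∑ b ∈ weightVectors n, ∑ Idnon ∈ idnonFuns n K L, ∑ i' ∈ memberSet b,
            A (i, splitAIAnswer L x train b Idnon i' i) (b i)))) := by
  unfold splitAIGame
  simp only [aux_bind]
  rw [Finset.sum_comm]
  congr 1
  simp only [Finset.mul_sum]
  refine Finset.sum_congr rfl fun b hb => ?_
  rw [Finset.sum_comm]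
  refine Finset.sum_congr rfl fun f _ => ?_
  have hne : (memberSet b).Nonempty := by
    rw [← Finset.card_pos, aux_card hb]; exact hn
  rw [Finset.sum_comm]
  simp only [uniformOn', dif_pos hne, aux_bind, aux_card hb, Finset.mul_sum]
  refine Finset.sum_congr rfl fun i' _ => ?_
  have hu : (Finset.univ : Finset (Fin (2 * n))).Nonempty := ⟨i', Finset.mem_univ _⟩
  refine Eq.trans (congrArg (fun t => ((idnonFuns n K L).card : ENNReal)⁻¹ *
    ((n : ENNReal)⁻¹ * t)) (aux_bind Finset.univ hu _ true)) ?_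
  simp only [aux_map, Finset.card_univ, Fintype.card_fin, Finset.mul_sum]

/-- the success probability of any direct single-query
membership-inference adversary against Split-AI is exactly `1/2`. -/
theorem splitAI_SQMI_eq_half
    (n K L k : ℕ) (hn : 0 < n) (hL : 1 ≤ L) (hLK : L ≤ K)
    {𝒳 : Type*} [DecidableEq 𝒳]
    (x : Fin (2 * n) → 𝒳) (train : Finset 𝒳 → 𝒳 → Fin k → ℝ)
    (A : Fin (2 * n) × (Fin k → ℝ) → PMF Bool) :
    splitAIGame hn hLK x train A true = 1 / 2 := by
  rw [aux_game]
  simp only [aux_index]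
  have hW : ((weightVectors n).card : ENNReal) ≠ 0 := by
    exact_mod_cast (Finset.card_pos.2 (weightVectors_nonempty n)).ne'
  have hI : ((idnonFuns n K L).card : ENNReal) ≠ 0 := by
    exact_mod_cast (Finset.card_pos.2 (idnonFuns_nonempty n K L hLK)).ne'
  have hs : (∑ i : Fin (2 * n), ((((weightVectors n).filter (fun b => b i = false)).card *
      ((idnonFuns n K L).card * n) : ℕ) : ENNReal))
      = (weightVectors n).card * ((idnonFuns n K L).card * (n * n)) := by
    rw [← Nat.cast_sum]
    norm_cast
    apply Nat.eq_of_mul_eq_mul_left (show 0 < 2 by norm_num)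
    rw [Finset.mul_sum]
    simp only [← mul_assoc, aux_half]
    simp
    ring
  rw [hs]
  have hn0 : (n : ENNReal) ≠ 0 := by exact_mod_cast hn.ne'
  have hr : ((weightVectors n).card : ENNReal)⁻¹ * (((idnonFuns n K L).card : ENNReal)⁻¹ *
        ((n : ENNReal)⁻¹ * (((2 * n : ℕ) : ENNReal)⁻¹ *
        ((weightVectors n).card * ((idnonFuns n K L).card * (n * n))))))
      = (((weightVectors n).card : ENNReal)⁻¹ * (weightVectors n).card) *
        ((((idnonFuns n K L).card : ENNReal)⁻¹ * (idnonFuns n K L).card) *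
        (((n : ENNReal)⁻¹ * n) * (((2 * n : ℕ) : ENNReal)⁻¹ * n))) := by ring
  rw [hr, ENNReal.inv_mul_cancel hW (ENNReal.natCast_ne_top _),
    ENNReal.inv_mul_cancel hI (ENNReal.natCast_ne_top _),
    ENNReal.inv_mul_cancel hn0 (ENNReal.natCast_ne_top _), one_mul, one_mul, one_mul]
  push_cast
  rw [ENNReal.mul_inv (Or.inl (by norm_num)) (Or.inl (by norm_num)), mul_assoc,
    ENNReal.inv_mul_cancel hn0 (ENNReal.natCast_ne_top _), mul_one, one_div]

end
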